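/- Let C be a strong divisibility sequence, let p be an ideal prime for C with parameter s = s(p), and write α = α(p). Let n = α·n' + r, m_1 = α·m_1' + r_1, m_2 = α·m_2' + r_2 with n', m_1', m_2' ≥ 0, 0 ≤ r, r_1, r_2 < α, m_1 + m_2 = n, and suppose r_1 + r_2 = r + α. Then ν_p(binom(n, m_1)_C) = s + ν_p(n' · binom(n'−1, m_1')), where binom(n'−1, m_1') is the ordinary binomial coefficient. -/

import Mathlib

open Finset

/-- A strong divisibility sequence: nonzero integers `Cs 1, Cs 2, ...` with
`gcd (Cs n) (Cs m) = |Cs (gcd n m)|`. -/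
def IsStrongDivSeq (Cs : ℕ → ℤ) : Prop :=
  (∀ n, 1 ≤ n → Cs n ≠ 0) ∧
  ∀ m n, 1 ≤ m → 1 ≤ n → Int.gcd (Cs n) (Cs m) = (Cs (Nat.gcd n m)).natAbs

/-- `a` is the rank of apparition of `m` in the sequence `Cs`:
the least index `j ≥ 1` such that `m ∣ Cs j`. -/
def IsRank (Cs : ℕ → ℤ) (m a : ℕ) : Prop :=
  1 ≤ a ∧ (m : ℤ) ∣ Cs a ∧ ∀ j, 1 ≤ j → (m : ℤ) ∣ Cs j → a ≤ j

/-- The `C`-orial: `0!_C = 1`, `n!_C = Cs 1 * Cs 2 * ⋯ * Cs n`. -/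
def Corial (Cs : ℕ → ℤ) : ℕ → ℤ
  | 0 => 1
  | n + 1 => Corial Cs n * Cs (n + 1)

/-- `p` is an ideal prime for `Cs`, with `α k` the rank of apparition of `p ^ k`
and parameter `s = s(p)`. -/
def IdealPrime (Cs : ℕ → ℤ) (p : ℕ) (α : ℕ → ℕ) (s : ℕ) : Prop :=
  1 ≤ s ∧ (∀ k, 1 ≤ k → IsRank Cs (p ^ k) (α k)) ∧
  (∀ k, 1 ≤ k → k ≤ s → α k = α 1) ∧
  (∀ k, s < k → α k = p ^ (k - s) * α 1)

/-- The `p`-adic valuation of the `C`-nomial coefficient `binom(n, m)_C`,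
defined as `ν_p(n!_C) - ν_p(m!_C) - ν_p((n-m)!_C)` (an integer). -/
def nuCnomial (p : ℕ) (Cs : ℕ → ℤ) (n m : ℕ) : ℤ :=
  (padicValInt p (Corial Cs n) : ℤ) - (padicValInt p (Corial Cs m) : ℤ)
    - (padicValInt p (Corial Cs (n - m)) : ℤ)

/-!
The terms divisible by `p ^ k` are exactly those whose index is a multiple of `α (p ^ k)`. For an
ideal prime this gives `ν_p(C_{αq}) = s + ν_p(q)`, while `ν_p(C_j) = 0` when `α ∤ j`. Hence, with
`N = ⌊n / α⌋`, a Legendre-type formula `ν_p(n!_C) = s N + ν_p(N!)` holds. In the `C`-nomial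
coefficient the carry `r₁ + r₂ = r + α` means `n' = m₁' + m₂' + 1`, so exactly one `s` survives
and `n'! / (m₁'! m₂'!) = n' * binom(n' - 1, m₁')`.
-/

section StrongDivisibility

variable {Cs : ℕ → ℤ}

lemma IsStrongDivSeq.dvd_of_dvd (hC : IsStrongDivSeq Cs) {m n : ℕ} (hn : 1 ≤ n) (hmn : m ∣ n) :
    Cs m ∣ Cs n := by
  have hgcd : Int.gcd (Cs n) (Cs m) = (Cs m).natAbs := by
    rw [hC.2 m n (Nat.pos_of_dvd_of_pos hmn hn) hn, Nat.gcd_eq_right hmn]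
  rw [← Int.natAbs_dvd, ← hgcd]
  exact Int.gcd_dvd_left _ _

lemma IsStrongDivSeq.dvd_apply_gcd (hC : IsStrongDivSeq Cs) {m n : ℕ} (hm : 1 ≤ m) (hn : 1 ≤ n)
    {d : ℤ} (hdm : d ∣ Cs m) (hdn : d ∣ Cs n) : d ∣ Cs (Nat.gcd n m) := by
  rw [← Int.dvd_natAbs, ← hC.2 m n hm hn]
  exact Int.dvd_coe_gcd hdn hdm

lemma IsRank.dvd_iff {d a : ℕ} (ha : IsRank Cs d a) (hC : IsStrongDivSeq Cs) {n : ℕ}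
    (hn : 1 ≤ n) : (d : ℤ) ∣ Cs n ↔ a ∣ n := by
  obtain ⟨ha_pos, hda, ha_min⟩ := ha
  refine ⟨fun hdn ↦ ?_, fun han ↦ hda.trans (hC.dvd_of_dvd hn han)⟩
  have hle : a ≤ Nat.gcd n a :=
    ha_min _ (Nat.gcd_pos_of_pos_left _ hn) (hC.dvd_apply_gcd ha_pos hn hda hdn)
  exact Nat.gcd_eq_right_iff_dvd.1 (le_antisymm (Nat.gcd_le_right _ ha_pos) hle)

lemma corial_ne_zero (hne : ∀ n, 1 ≤ n → Cs n ≠ 0) (n : ℕ) : Corial Cs n ≠ 0 := by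
  induction n with
  | zero => exact one_ne_zero
  | succ n ih => exact mul_ne_zero ih (hne _ n.succ_pos)

end StrongDivisibility

section Valuation

open scoped Nat

lemma padicValNat_factorial_add_add_one (p : ℕ) [Fact p.Prime] (a b : ℕ) :
    padicValNat p (a + b + 1)! =
      padicValNat p ((a + b + 1) * (a + b).choose a) + padicValNat p a ! + padicValNat p b ! := by
  have hfactor : (a + b + 1)! = (a + b + 1) * (a + b).choose a * a ! * b ! := by
    rw [Nat.factorial_succ, ← Nat.add_choose_mul_factorial_mul_factorial, Nat.choose_symm_add]
    ring
  have hne : (a + b + 1) * (a + b).choose a ≠ 0 :=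
    mul_ne_zero (Nat.succ_ne_zero _) (Nat.choose_pos (Nat.le_add_right a b)).ne'
  rw [hfactor, padicValNat.mul (mul_ne_zero hne a.factorial_ne_zero) b.factorial_ne_zero,
    padicValNat.mul hne a.factorial_ne_zero]

namespace IdealPrime

variable {Cs : ℕ → ℤ} {p : ℕ} {α : ℕ → ℕ} {s : ℕ}

lemma rank_pos (hid : IdealPrime Cs p α s) : 1 ≤ α 1 :=
  (hid.2.1 1 le_rfl).1

lemma dvd_iff (hid : IdealPrime Cs p α s) (hC : IsStrongDivSeq Cs) {n : ℕ} (hn : 1 ≤ n) :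
    (p : ℤ) ∣ Cs n ↔ α 1 ∣ n := by
  simpa only [pow_one] using (hid.2.1 1 le_rfl).dvd_iff hC hn

variable [Fact p.Prime]

lemma pow_dvd_apply_mul_iff (hid : IdealPrime Cs p α s) (hC : IsStrongDivSeq Cs) {q : ℕ}
    (hq : 1 ≤ q) (k : ℕ) : (p : ℤ) ^ k ∣ Cs (α 1 * q) ↔ k ≤ s + padicValNat p q := by
  have hrank_pos := hid.rank_pos
  obtain ⟨-, hrank, hrank_le, hrank_gt⟩ := hid
  rcases Nat.eq_zero_or_pos k with rfl | hk
  · simp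
  rw [← Nat.cast_pow, (hrank k hk).dvd_iff hC (Nat.mul_pos hrank_pos hq)]
  rcases le_or_gt k s with hks | hsk
  · rw [hrank_le k hk hks]
    exact iff_of_true (dvd_mul_right _ _) (hks.trans (Nat.le_add_right _ _))
  · rw [hrank_gt k hsk, mul_comm, Nat.mul_dvd_mul_iff_left hrank_pos,
      padicValNat_dvd_iff_le (Nat.ne_of_gt hq), Nat.sub_le_iff_le_add']

lemma padicValInt_apply_mul (hid : IdealPrime Cs p α s) (hC : IsStrongDivSeq Cs) {q : ℕ}
    (hq : 1 ≤ q) : padicValInt p (Cs (α 1 * q)) = s + padicValNat p q := by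
  have hne : Cs (α 1 * q) ≠ 0 := hC.1 _ (Nat.mul_pos hid.rank_pos hq)
  refine eq_of_forall_le_iff fun k ↦ ?_
  rw [← hid.pow_dvd_apply_mul_iff hC hq, padicValInt_dvd_iff, or_iff_right hne]

lemma padicValInt_corial (hid : IdealPrime Cs p α s) (hC : IsStrongDivSeq Cs) (n : ℕ) :
    padicValInt p (Corial Cs n) = s * (n / α 1) + padicValNat p (n / α 1)! := by
  induction n with
  | zero => simp [Corial]
  | succ n ih =>
    rw [Corial, padicValInt.mul (corial_ne_zero hC.1 n) (hC.1 _ n.succ_pos), ih]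
    by_cases hdvd : α 1 ∣ n + 1
    · have hindex : n + 1 = α 1 * (n / α 1 + 1) := by
        rw [← Nat.succ_div_of_dvd hdvd, Nat.mul_div_cancel' hdvd]
      have hlast : padicValInt p (Cs (n + 1)) = s + padicValNat p (n / α 1 + 1) := by
        rw [← hid.padicValInt_apply_mul hC (Nat.le_add_left 1 _), ← hindex]
      rw [hlast, Nat.succ_div_of_dvd hdvd, Nat.factorial_succ,
        padicValNat.mul (Nat.succ_ne_zero _) (Nat.factorial_ne_zero _)]
      ring
    · have hlast : padicValInt p (Cs (n + 1)) = 0 :=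
        padicValInt.eq_zero_of_not_dvd (mt (hid.dvd_iff hC n.succ_pos).1 hdvd)
      rw [hlast, Nat.succ_div_of_not_dvd hdvd, add_zero]

lemma nuCnomial_add_of_carry (hid : IdealPrime Cs p α s) (hC : IsStrongDivSeq Cs) {a b : ℕ}
    (hcarry : α 1 ≤ a % α 1 + b % α 1) :
    nuCnomial p Cs (a + b) a =
      s + padicValNat p ((a / α 1 + b / α 1 + 1) * (a / α 1 + b / α 1).choose (a / α 1)) := by
  have hquot : (a + b) / α 1 = a / α 1 + b / α 1 + 1 :=
    Nat.add_div_eq_of_le_mod_add_mod hcarry hid.rank_pos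
  rw [nuCnomial, Nat.add_sub_cancel_left, hid.padicValInt_corial hC, hid.padicValInt_corial hC,
    hid.padicValInt_corial hC, hquot, padicValNat_factorial_add_add_one]
  push_cast
  ring

end IdealPrime

end Valuation

theorem stmt9 (Cs : ℕ → ℤ) (p : ℕ) (hp : p.Prime) (α : ℕ → ℕ) (s : ℕ)
    (hC : IsStrongDivSeq Cs) (hid : IdealPrime Cs p α s)
    (n n' r m1 m1' r1 m2 m2' r2 : ℕ)
    (hn : n = α 1 * n' + r) (hm1 : m1 = α 1 * m1' + r1) (hm2 : m2 = α 1 * m2' + r2)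
    (hr : r < α 1) (hr1 : r1 < α 1) (hr2 : r2 < α 1) (hsum : m1 + m2 = n)
    (hr12 : r1 + r2 = r + α 1) :
    nuCnomial p Cs n m1 =
      (s : ℤ) + (padicValNat p (n' * Nat.choose (n' - 1) m1') : ℤ) := by
  have := Fact.mk hp
  obtain ⟨hquot1, hrem1⟩ : m1 / α 1 = m1' ∧ m1 % α 1 = r1 :=
    (Nat.div_mod_unique hid.rank_pos).2 ⟨by rw [hm1, add_comm], hr1⟩
  obtain ⟨hquot2, hrem2⟩ : m2 / α 1 = m2' ∧ m2 % α 1 = r2 :=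
    (Nat.div_mod_unique hid.rank_pos).2 ⟨by rw [hm2, add_comm], hr2⟩
  have hcarry : α 1 ≤ m1 % α 1 + m2 % α 1 := by
    rw [hrem1, hrem2, hr12]
    exact Nat.le_add_left _ _
  have hn' : n' = m1' + m2' + 1 := by
    refine Nat.eq_of_mul_eq_mul_left hid.rank_pos ?_
    linarith
  rw [← hsum, hid.nuCnomial_add_of_carry hC hcarry, hquot1, hquot2, hn', Nat.add_sub_cancel]
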